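/- Let k ≥ 3, n = (k−1)(k+1)+2 and g = (k−1)(k+1). Let t be an integer with 1 ≤ t and 2t ≤ ((k−1)(k+1)+1) + 2 (i.e., t ≤ ((k−1)(k+1)+1)/2 + 1), and suppose (k, t) ≠ (3, 5). Then for each of the four neighbourhood cases a, b, c, d of w^+, the graph S^+_k − v_t is isomorphic to an induced subgraph of J_k − z_g. -/

import Mathlib

/-- The `k`-path power on `n` vertices (0-indexed: vertex `i : Fin n` represents
vertex `i+1`): distinct vertices are adjacent iff their indices differ by at most `k`. -/
def pathPower (k n : ℕ) : SimpleGraph (Fin n) :=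
  SimpleGraph.fromRel (fun i j => |(i.val : ℤ) - (j.val : ℤ)| ≤ k)

/-- `G - x`: the induced subgraph of `G` on all vertices other than `x`. -/
def deleteVert {V : Type*} (G : SimpleGraph V) (x : V) : SimpleGraph {y : V // y ∈ {y : V | y ≠ x}} :=
  G.induce {y : V | y ≠ x}

/-- The graph `J_k`: the `k`-path power on `(2k-1)(k+1)+1` vertices. -/
def Jgraph (k : ℕ) : SimpleGraph (Fin ((2 * k - 1) * (k + 1) + 1)) :=
  pathPower k ((2 * k - 1) * (k + 1) + 1)

/-- Vertices of the graph `S^+_k` (with `n = (k-1)(k+1)+2` path-power vertices):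
`v i` represents `v_{i+1}`, together with `w_1, w_2, w_3, w_4` and `w^+`. -/
inductive SPVert (n : ℕ) where
  | v (i : Fin n)
  | w1 | w2 | w3 | w4
  | wp

/-- The graph `S^+_k` on path-power part of size `n`, where the neighbourhood of the
extra vertex `w^+` is the set `A`:  the vertices `v_1, …, v_n` induce a `k`-path power,
with the additional edges `w_1w_2`, `w_2v_1`, `v_nw_3`, `w_3w_4`, and `w^+` joined to `A`. -/
def SPlusGraph (k n : ℕ) (A : Set (SPVert n)) : SimpleGraph (SPVert n) :=
  SimpleGraph.fromRel (fun x y =>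
    (∃ i j : Fin n, x = .v i ∧ y = .v j ∧ |(i.val : ℤ) - (j.val : ℤ)| ≤ k) ∨
    (x = .w1 ∧ y = .w2) ∨
    (∃ i : Fin n, x = .w2 ∧ y = .v i ∧ i.val = 0) ∨
    (∃ i : Fin n, x = .v i ∧ i.val = n - 1 ∧ y = .w3) ∨
    (x = .w3 ∧ y = .w4) ∨
    (x = .wp ∧ y ∈ A))

/-- Case-a neighbourhood of `w^+`: `{w_1, w_2, v_1, …, v_k}`. -/
def caseA (k n : ℕ) : Set (SPVert n) :=
  {x | x = .w1 ∨ x = .w2 ∨ ∃ i : Fin n, x = .v i ∧ i.val < k}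

/-- Case-b neighbourhood of `w^+`: `{v_{n-k+1}, …, v_n, w_3, w_4}`. -/
def caseB (k n : ℕ) : Set (SPVert n) :=
  {x | x = .w3 ∨ x = .w4 ∨ ∃ i : Fin n, x = .v i ∧ n - k ≤ i.val}

/-- Case-c neighbourhood of `w^+`: `{w_1, w_2, v_1, …, v_{k-1}}`. -/
def caseC (k n : ℕ) : Set (SPVert n) :=
  {x | x = .w1 ∨ x = .w2 ∨ ∃ i : Fin n, x = .v i ∧ i.val < k - 1}

/-- Case-d neighbourhood of `w^+`: `{v_{n-k+2}, …, v_n, w_3, w_4}`. -/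
def caseD (k n : ℕ) : Set (SPVert n) :=
  {x | x = .w3 ∨ x = .w4 ∨ ∃ i : Fin n, x = .v i ∧ n - k + 1 ≤ i.val}

/-!
Place `v_i` at the integer `i`, with `w_2` and `w_3` at distance `k` from `v_1` and `v_n` and with
`w_1` and `w_4` one step further out. In each of the four cases one of the two integers nearest to
the block of `v_i`'s on the appropriate side sees exactly the prescribed neighbourhood of `w^+`.
So all of `S^+_k` is an induced subgraph of the `k`-th power of the two-way infinite path, inside an
interval of `n + 2k + 2` integers. The translation taking `v_t` to `z_g` keeps this interval inside
`J_k`, and it remains to delete `v_t` and its image.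
-/

/-- The `k`-th power of the two-way infinite path, in which `k`-path powers sit as intervals. -/
def intPathPower (k : ℕ) : SimpleGraph ℤ :=
  SimpleGraph.fromRel (fun a b => |a - b| ≤ k)

lemma intPathPower_adj {k : ℕ} {a b : ℤ} :
    (intPathPower k).Adj a b ↔ a ≠ b ∧ |a - b| ≤ k := by
  rw [intPathPower, SimpleGraph.fromRel_adj, abs_sub_comm b a, or_self]

lemma pathPower_adj {k n : ℕ} {i j : Fin n} :
    (pathPower k n).Adj i j ↔ i ≠ j ∧ |(i : ℤ) - j| ≤ k := by
  rw [pathPower, SimpleGraph.fromRel_adj, abs_sub_comm (j : ℤ) i, or_self]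

section Embeddings

variable {V W : Type*} {G : SimpleGraph V} {H : SimpleGraph W}

/-- An induced embedding restricts to an induced embedding after deleting a vertex and its image. -/
def deleteVertEmbedding (φ : G ↪g H) {x : V} {z : W} (hxz : φ x = z) :
    deleteVert G x ↪g deleteVert H z where
  toFun y := ⟨φ y, fun hyz => y.2 (φ.injective (hyz.trans hxz.symm))⟩
  inj' _ _ h := Subtype.ext (φ.injective (congrArg Subtype.val h))
  map_rel_iff' := φ.map_rel_iff

/-- A graph induced in the infinite path power whose translate by `s` lies in `[0, m)` is induced
in the path power on `m` vertices. -/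
def pathPowerEmbedding {k m : ℕ} (φ : G ↪g intPathPower k) (s : ℤ)
    (hφ : ∀ x, φ x + s ∈ Set.Ico 0 (m : ℤ)) : G ↪g pathPower k m where
  toFun x := ⟨(φ x + s).toNat, (Int.toNat_lt (hφ x).1).2 (hφ x).2⟩
  inj' x y h := φ.injective <| by
    have hx := (hφ x).1
    have hy := (hφ y).1
    simp only [Fin.mk.injEq] at h
    omega
  map_rel_iff' {x y} := by
    have hx := Int.toNat_of_nonneg (hφ x).1
    have hy := Int.toNat_of_nonneg (hφ y).1
    change (pathPower k m).Adj ⟨(φ x + s).toNat, _⟩ ⟨(φ y + s).toNat, _⟩ ↔ G.Adj x y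
    rw [← φ.map_adj_iff, pathPower_adj, intPathPower_adj, Ne, Fin.mk.injEq, ← Int.natCast_inj,
      hx, hy, add_left_inj, add_sub_add_right_eq_sub]

lemma pathPowerEmbedding_apply {k m : ℕ} (φ : G ↪g intPathPower k) (s : ℤ)
    (hφ : ∀ x, φ x + s ∈ Set.Ico 0 (m : ℤ)) (x : V) :
    (pathPowerEmbedding φ s hφ x : ℤ) = φ x + s :=
  Int.toNat_of_nonneg (hφ x).1

end Embeddings

/-- Integer positions for the vertices of `S^+_k`, with `v_{i+1}` at `i` and `w^+` at `q`. -/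
def layout (k n : ℕ) (q : ℤ) : SPVert n → ℤ
  | .v i => i
  | .w1 => -k - 1
  | .w2 => -k
  | .w3 => n - 1 + k
  | .w4 => n + k
  | .wp => q

/-- The position `q` is admissible for `w^+` with neighbourhood `A`: it lies strictly between `w_2`
and `v_1` or strictly between `v_n` and `w_3`, and the vertices within distance `k` of it are those
of `A`. -/
structure IsSlot (k n : ℕ) (A : Set (SPVert n)) (q : ℤ) : Prop where
  mem_gap : q ∈ Set.Ioo (-k : ℤ) 0 ∪ Set.Ico (n : ℤ) (n - 1 + k)
  mem_iff : ∀ x ≠ .wp, x ∈ A ↔ |q - layout k n q x| ≤ k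

section Slots

variable {k n : ℕ}

lemma isSlot_caseA (hk : 2 ≤ k) (hn : 1 ≤ n) : IsSlot k n (caseA k n) (-1) where
  mem_gap := .inl ⟨by omega, by omega⟩
  mem_iff x hx := by
    cases x <;> simp [caseA, layout, abs_le] at hx ⊢ <;> omega

lemma isSlot_caseB (hk : 2 ≤ k) (hn : 1 ≤ n) : IsSlot k n (caseB k n) n where
  mem_gap := .inr ⟨le_rfl, by omega⟩
  mem_iff x hx := by
    cases x <;> simp [caseB, layout, abs_le] at hx ⊢ <;> omega

lemma isSlot_caseC (hk : 3 ≤ k) : IsSlot k n (caseC k n) (-2) where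
  mem_gap := .inl ⟨by omega, by omega⟩
  mem_iff x hx := by
    cases x <;> simp [caseC, layout, abs_le] at hx ⊢ <;> omega

lemma isSlot_caseD (hk : 3 ≤ k) (hkn : k ≤ n) : IsSlot k n (caseD k n) (n + 1) where
  mem_gap := .inr ⟨by omega, by omega⟩
  mem_iff x hx := by
    cases x <;> simp [caseD, layout, abs_le] at hx ⊢ <;> omega

end Slots

section SPlusGraph

variable {k n : ℕ} {A : Set (SPVert n)} {q : ℤ}

lemma SPlusGraph_adj_wp {x : SPVert n} :
    (SPlusGraph k n A).Adj .wp x ↔ x ≠ .wp ∧ x ∈ A := by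
  simp only [SPlusGraph, SimpleGraph.fromRel_adj]
  cases x <;> simp

lemma SPlusGraph_adj_v {i j : Fin n} :
    (SPlusGraph k n A).Adj (.v i) (.v j) ↔ i ≠ j ∧ |(i : ℤ) - j| ≤ k := by
  simp [SPlusGraph, SimpleGraph.fromRel_adj, abs_sub_comm (j : ℤ) i]

lemma SPlusGraph_adj_iff_of_ne_wp (hk : 2 ≤ k) {x y : SPVert n} (hx : x ≠ .wp) (hy : y ≠ .wp) :
    (SPlusGraph k n A).Adj x y ↔ x ≠ y ∧ |layout k n q x - layout k n q y| ≤ k := by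
  cases x <;> cases y
  case v.v i j => simpa only [layout, ne_eq, SPVert.v.injEq] using SPlusGraph_adj_v
  all_goals simp [SPlusGraph, layout, abs_le] at hx hy ⊢ <;> omega

namespace IsSlot

lemma two_le (h : IsSlot k n A q) : 2 ≤ k := by
  rcases h.mem_gap with ⟨h₁, h₂⟩ | ⟨h₁, h₂⟩ <;> omega

lemma layout_injective (h : IsSlot k n A q) : Function.Injective (layout k n q) := by
  have hk := h.two_le
  have hq := h.mem_gap
  simp only [Set.mem_union, Set.mem_Ioo, Set.mem_Ico] at hq
  intro x y hxy
  cases x <;> cases y <;>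
    simp only [layout, SPVert.v.injEq, reduceCtorEq, Fin.ext_iff] at hxy ⊢ <;> omega

lemma layout_mem_Icc (h : IsSlot k n A q) (x : SPVert n) :
    layout k n q x ∈ Set.Icc (-k - 1 : ℤ) (n + k) := by
  have hq := h.mem_gap
  simp only [Set.mem_union, Set.mem_Ioo, Set.mem_Ico] at hq
  cases x <;> simp only [layout, Set.mem_Icc] <;> omega

lemma adj_wp_iff (h : IsSlot k n A q) {x : SPVert n} :
    (SPlusGraph k n A).Adj .wp x ↔ x ≠ .wp ∧ |q - layout k n q x| ≤ k := by
  rw [SPlusGraph_adj_wp]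
  exact and_congr_right (h.mem_iff x)

lemma adj_iff (h : IsSlot k n A q) {x y : SPVert n} :
    (SPlusGraph k n A).Adj x y ↔ x ≠ y ∧ |layout k n q x - layout k n q y| ≤ k := by
  by_cases hx : x = .wp
  · subst hx
    rw [h.adj_wp_iff, ne_comm, layout]
  by_cases hy : y = .wp
  · subst hy
    rw [SimpleGraph.adj_comm, h.adj_wp_iff, abs_sub_comm, layout]
  exact SPlusGraph_adj_iff_of_ne_wp h.two_le hx hy

/-- The induced embedding of `S^+_k` into the infinite path power given by `layout`. -/
def layoutEmbedding (h : IsSlot k n A q) : SPlusGraph k n A ↪g intPathPower k where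
  toFun := layout k n q
  inj' := h.layout_injective
  map_rel_iff' {x y} := by
    change (intPathPower k).Adj (layout k n q x) (layout k n q y) ↔ _
    rw [intPathPower_adj, h.adj_iff, h.layout_injective.ne_iff]

theorem nonempty_deleteVert_embedding {m : ℕ} (h : IsSlot k n A q) {i : Fin n} {z : Fin m}
    (hleft : (i : ℕ) + (k + 1) ≤ z) (hright : (z : ℕ) + n + k < m + i) :
    Nonempty (deleteVert (SPlusGraph k n A) (.v i) ↪g deleteVert (pathPower k m) z) := by
  have hwindow (x : SPVert n) : h.layoutEmbedding x + ((z : ℤ) - i) ∈ Set.Ico 0 (m : ℤ) := by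
    obtain ⟨hlower, hupper⟩ : h.layoutEmbedding x ∈ Set.Icc (-k - 1 : ℤ) (n + k) :=
      h.layout_mem_Icc x
    constructor <;> omega
  have himage : pathPowerEmbedding h.layoutEmbedding _ hwindow (.v i) = z := by
    rw [Fin.ext_iff, ← Int.natCast_inj, pathPowerEmbedding_apply]
    exact add_sub_cancel (i : ℤ) z
  exact ⟨deleteVertEmbedding _ himage⟩

end IsSlot

end SPlusGraph

theorem SPlus_minus_vt_embeds_general {k n m : ℕ} (hk : 3 ≤ k) (hkn : k ≤ n) (i : Fin n)
    (z : Fin m) (hleft : (i : ℕ) + (k + 1) ≤ z) (hright : (z : ℕ) + n + k < m + i) :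
    Nonempty (deleteVert (SPlusGraph k n (caseA k n)) (.v i) ↪g deleteVert (pathPower k m) z) ∧
    Nonempty (deleteVert (SPlusGraph k n (caseB k n)) (.v i) ↪g deleteVert (pathPower k m) z) ∧
    Nonempty (deleteVert (SPlusGraph k n (caseC k n)) (.v i) ↪g deleteVert (pathPower k m) z) ∧
    Nonempty (deleteVert (SPlusGraph k n (caseD k n)) (.v i) ↪g deleteVert (pathPower k m) z) :=
  ⟨(isSlot_caseA (by omega) (by omega)).nonempty_deleteVert_embedding hleft hright,
    (isSlot_caseB (by omega) (by omega)).nonempty_deleteVert_embedding hleft hright,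
    (isSlot_caseC hk).nonempty_deleteVert_embedding hleft hright,
    (isSlot_caseD hk hkn).nonempty_deleteVert_embedding hleft hright⟩

section Arithmetic

variable {k : ℕ}

lemma two_mul_sub_one_mul_add_one (hk : 1 ≤ k) :
    (2 * k - 1) * (k + 1) = 2 * ((k - 1) * (k + 1)) + (k + 1) := by
  obtain ⟨r, rfl⟩ := Nat.exists_eq_add_of_le' hk
  rw [show 2 * (r + 1) - 1 = 2 * r + 1 by omega, Nat.add_sub_cancel]
  ring

lemma add_succ_le_pred_mul_succ {t : ℕ} (hk : 3 ≤ k) (ht : 2 * t ≤ ((k - 1) * (k + 1) + 1) + 2)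
    (hkt : ¬(k = 3 ∧ t = 5)) : t + (k + 1) ≤ (k - 1) * (k + 1) := by
  obtain rfl | hk4 := hk.eq_or_lt
  · omega
  · have hg : 2 * k + 5 ≤ (k - 1) * (k + 1) := by
      obtain ⟨r, rfl⟩ := Nat.exists_eq_add_of_le' hk4
      rw [show r + 4 - 1 = r + 3 by omega]
      nlinarith
    omega

end Arithmetic

/-- Let `k ≥ 3`, `n = (k-1)(k+1)+2`, `g = (k-1)(k+1)`.  Let `1 ≤ t` with
`2t ≤ ((k-1)(k+1)+1) + 2` (i.e. `t ≤ ((k-1)(k+1)+1)/2 + 1`), and `(k, t) ≠ (3, 5)`.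
Then for each of the four neighbourhood cases a, b, c, d of `w^+`, the graph
`S^+_k - v_t` is isomorphic to an induced subgraph of `J_k - z_g`.
Here `i` is the 0-based index `t - 1` of `v_t` and `zg` has 0-based index `g - 1`. -/
theorem SPlus_minus_vt_embeds (k t : ℕ) (hk : 3 ≤ k) (ht1 : 1 ≤ t)
    (ht2 : 2 * t ≤ ((k - 1) * (k + 1) + 1) + 2) (hkt : ¬(k = 3 ∧ t = 5))
    (i : Fin ((k - 1) * (k + 1) + 2)) (hi : (i : ℕ) = t - 1)
    (zg : Fin ((2 * k - 1) * (k + 1) + 1)) (hzg : (zg : ℕ) = (k - 1) * (k + 1) - 1) :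
    Nonempty (deleteVert (SPlusGraph k ((k - 1) * (k + 1) + 2)
        (caseA k ((k - 1) * (k + 1) + 2))) (.v i) ↪g deleteVert (Jgraph k) zg) ∧
    Nonempty (deleteVert (SPlusGraph k ((k - 1) * (k + 1) + 2)
        (caseB k ((k - 1) * (k + 1) + 2))) (.v i) ↪g deleteVert (Jgraph k) zg) ∧
    Nonempty (deleteVert (SPlusGraph k ((k - 1) * (k + 1) + 2)
        (caseC k ((k - 1) * (k + 1) + 2))) (.v i) ↪g deleteVert (Jgraph k) zg) ∧
    Nonempty (deleteVert (SPlusGraph k ((k - 1) * (k + 1) + 2)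
        (caseD k ((k - 1) * (k + 1) + 2))) (.v i) ↪g deleteVert (Jgraph k) zg) := by
  have hleft := add_succ_le_pred_mul_succ hk ht2 hkt
  have hlength := two_mul_sub_one_mul_add_one (k := k) (by omega)
  exact SPlus_minus_vt_embeds_general hk (by omega) i zg (by omega) (by omega)
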